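/- Let G~ be a mixed bicyclic graph whose underlying graph is θ(p,l,q) with p even and l, q odd. Then r(G~) = 2m(G) − 2κ(G) + 1 if and only if the two odd cycles of G~ have even signatures and the even cycle C~_{q+l−2} of G~ satisfies q + l + σ(C~_{q+l−2}) ≡ 2 (mod 4). -/

import Mathlib

open scoped Classical

namespace MixedPaper

universe u

/-- A mixed graph: a finite simple graph together with an orientation of a subset
of its edges.  `arc u v = true` means there is an arc from `u` to `v`. -/
structure MixedGraph (V : Type u) where
  graph : SimpleGraph V
  arc : V → V → Bool
  arc_adj : ∀ u v, arc u v → graph.Adj u v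
  arc_antisymm : ∀ u v, arc u v → ¬ arc v u

variable {V : Type u}

/-- The Hermitian adjacency matrix of a mixed graph. -/
noncomputable def MixedGraph.hMatrix [Fintype V] [DecidableEq V] (M : MixedGraph V) :
    Matrix V V ℂ := fun u v =>
  if M.arc u v then Complex.I
  else if M.arc v u then -Complex.I
  else if M.graph.Adj u v then 1 else 0

/-- The H-rank of a mixed graph: the rank of its Hermitian adjacency matrix. -/
noncomputable def MixedGraph.hRank [Fintype V] [DecidableEq V] (M : MixedGraph V) : ℕ :=
  M.hMatrix.rank

/-- The matching number of a simple graph. -/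
noncomputable def matchingNumber (G : SimpleGraph V) : ℕ :=
  sSup {k | ∃ N : G.Subgraph, N.IsMatching ∧ N.edgeSet.ncard = k}

/-- A subgraph is a cycle subgraph if it is connected and every one of its vertices
has exactly two neighbours in it. -/
def IsCycleSubgraph {G : SimpleGraph V} (C : G.Subgraph) : Prop :=
  C.Connected ∧ ∀ v ∈ C.verts, {w | C.Adj v w}.ncard = 2

/-- κ(G) : the number of even cycles of G. -/
noncomputable def evenCycleCount (G : SimpleGraph V) : ℕ :=
  {C : G.Subgraph | IsCycleSubgraph C ∧ Even C.verts.ncard}.ncard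

/-- c(G) = |E(G)| - |V(G)| + ω(G), the cyclomatic number. -/
noncomputable def cyclomatic [Fintype V] (G : SimpleGraph V) : ℤ :=
  (G.edgeSet.ncard : ℤ) - (Fintype.card V : ℤ) + (Nat.card G.ConnectedComponent : ℤ)

/-- The induced mixed subgraph on a set of vertices. -/
def MixedGraph.induce (M : MixedGraph V) (S : Set V) : MixedGraph S where
  graph := M.graph.induce S
  arc := fun a b => M.arc a.1 b.1
  arc_adj := fun a b h => M.arc_adj a.1 b.1 h
  arc_antisymm := fun a b h => M.arc_antisymm a.1 b.1 h

/-- The mixed subgraph induced by a connected component of the underlying graph. -/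
def MixedGraph.comp (M : MixedGraph V) (c : M.graph.ConnectedComponent) :
    MixedGraph c.supp := M.induce c.supp

/-- The signature |f - b| of a closed walk in a mixed graph: the absolute difference
between the numbers of forward and backward arcs along the walk. -/
def walkSignature (M : MixedGraph V) {u : V} (w : M.graph.Walk u u) : ℕ :=
  ((w.darts.countP fun d => M.arc d.toProd.1 d.toProd.2 : ℤ) -
    (w.darts.countP fun d => M.arc d.toProd.2 d.toProd.1 : ℤ)).natAbs

/-- The signature of the cycle subgraph `C` of the mixed graph `M` satisfies the
predicate `P` (expressed via a closed walk traversing `C`; the signature does not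
depend on the choice of traversal). -/
def CycleSig (M : MixedGraph V) (C : M.graph.Subgraph) (P : ℕ → Prop) : Prop :=
  ∃ (u : V) (w : M.graph.Walk u u), w.IsCycle ∧
    {v | v ∈ w.support} = C.verts ∧ {e | e ∈ w.edges} = C.edgeSet ∧
    P (walkSignature M w)

/-- `C` is a pendant cycle with unique vertex `x` of degree 3. -/
def IsPendantCycle (G : SimpleGraph V) (C : G.Subgraph) (x : V) : Prop :=
  IsCycleSubgraph C ∧ x ∈ C.verts ∧ {w | G.Adj x w}.ncard = 3 ∧
    ∀ v ∈ C.verts, v ≠ x → {w | G.Adj v w}.ncard = 2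

/-- G has no pendant vertices (vertices of degree 1). -/
def NoPendantVerts (G : SimpleGraph V) : Prop := ∀ u : V, {w | G.Adj u w}.ncard ≠ 1

/-- The (distinct) cycles of G are pairwise vertex-disjoint. -/
def CyclesVertexDisjoint (G : SimpleGraph V) : Prop :=
  ∀ C₁ C₂ : G.Subgraph, IsCycleSubgraph C₁ → IsCycleSubgraph C₂ → C₁ ≠ C₂ →
    Disjoint C₁.verts C₂.verts

/-- The (distinct) even cycles of G are pairwise vertex-disjoint. -/
def EvenCyclesVertexDisjoint (G : SimpleGraph V) : Prop :=
  ∀ C₁ C₂ : G.Subgraph, IsCycleSubgraph C₁ → IsCycleSubgraph C₂ →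
    Even C₁.verts.ncard → Even C₂.verts.ncard → C₁ ≠ C₂ →
    Disjoint C₁.verts C₂.verts

/-- One pendant `K₂` deletion step, recorded on the surviving vertex sets:
`u` is pendant in the graph induced on `S` with unique neighbour `v` there,
and both are deleted. -/
def PendantStep (G : SimpleGraph V) (S T : Set V) : Prop :=
  ∃ u v, u ∈ S ∧ v ∈ S ∧ {w | w ∈ S ∧ G.Adj u w} = {v} ∧ T = S \ {u, v}

/-- `S` is reachable from the full vertex set by a sequence of pendant K₂ deletions. -/
def PendantReaches (G : SimpleGraph V) (S : Set V) : Prop :=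
  Relation.ReflTransGen (PendantStep G) Set.univ S

/-- The graph induced on `S` has no pendant vertices. -/
def NoPendantIn (G : SimpleGraph V) (S : Set V) : Prop :=
  ∀ u ∈ S, {w | w ∈ S ∧ G.Adj u w}.ncard ≠ 1

/-- `u` lies on some even cycle of `G`. -/
def OnEvenCycle (G : SimpleGraph V) (u : V) : Prop :=
  ∃ C : G.Subgraph, IsCycleSubgraph C ∧ Even C.verts.ncard ∧ u ∈ C.verts

/-- G is the graph ∞(p,1,q): two cycles of lengths p and q sharing exactly one vertex. -/
def IsInfinityGraph (G : SimpleGraph V) (p q : ℕ) : Prop :=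
  ∃ C₁ C₂ : G.Subgraph, IsCycleSubgraph C₁ ∧ IsCycleSubgraph C₂ ∧
    C₁.verts.ncard = p ∧ C₂.verts.ncard = q ∧
    (C₁.verts ∩ C₂.verts).ncard = 1 ∧ C₁ ⊔ C₂ = ⊤

/-- G is the theta graph θ(p,l,q): three internally disjoint paths with p, l, q
vertices respectively, joining two common endvertices. -/
def IsThetaGraph (G : SimpleGraph V) (p l q : ℕ) : Prop :=
  2 ≤ p ∧ 2 ≤ l ∧ 2 ≤ q ∧ ¬(p = 2 ∧ l = 2) ∧ ¬(p = 2 ∧ q = 2) ∧ ¬(l = 2 ∧ q = 2) ∧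
  ∃ (a b : V) (W₁ W₂ W₃ : G.Walk a b), W₁.IsPath ∧ W₂.IsPath ∧ W₃.IsPath ∧
    W₁.length = p - 1 ∧ W₂.length = l - 1 ∧ W₃.length = q - 1 ∧
    (∀ v : V, v ∈ W₁.support ∨ v ∈ W₂.support ∨ v ∈ W₃.support) ∧
    (∀ e ∈ G.edgeSet, e ∈ W₁.edges ∨ e ∈ W₂.edges ∨ e ∈ W₃.edges) ∧
    {v | v ∈ W₁.support ∧ v ∈ W₂.support} = {a, b} ∧
    {v | v ∈ W₁.support ∧ v ∈ W₃.support} = {a, b} ∧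
    {v | v ∈ W₂.support ∧ v ∈ W₃.support} = {a, b}

/-- Every odd cycle of `M` has signature satisfying `P`. -/
def OddCyclesSig (M : MixedGraph V) (P : ℕ → Prop) : Prop :=
  ∀ C : M.graph.Subgraph, IsCycleSubgraph C → Odd C.verts.ncard → CycleSig M C P

/-- Every even cycle of `M`, of length `n`, has signature `s` satisfying `P n s`. -/
def EvenCyclesSig (M : MixedGraph V) (P : ℕ → ℕ → Prop) : Prop :=
  ∀ C : M.graph.Subgraph, IsCycleSubgraph C → Even C.verts.ncard →
    CycleSig M C (P C.verts.ncard)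

/-- The whole mixed graph is a single cycle. -/
def IsCycleMG (M : MixedGraph V) : Prop := IsCycleSubgraph (⊤ : M.graph.Subgraph)

/-- The family 𝔊₀. -/
def MemG0 [Fintype V] [DecidableEq V] (M : MixedGraph V) : Prop :=
  M.graph.Connected ∧ 1 ≤ cyclomatic M.graph ∧ CyclesVertexDisjoint M.graph ∧
  NoPendantVerts M.graph ∧
  ∃ (C : M.graph.Subgraph) (x : V), IsPendantCycle M.graph C x ∧ Odd C.verts.ncard ∧
    CycleSig M C Odd ∧
    ((M.induce (C.vertsᶜ ∪ {x})).hRank : ℤ) =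
      2 * (matchingNumber (M.induce (C.vertsᶜ ∪ {x})).graph : ℤ) -
        2 * cyclomatic (M.induce (C.vertsᶜ ∪ {x})).graph

/-- The family 𝔛₁ : mixed ∞(p,1,q)-graphs, p even, q odd, whose odd cycle has odd
signature and whose even cycle C̃_p satisfies σ ≡ p (mod 4). -/
def MemX1 (M : MixedGraph V) : Prop :=
  ∃ p q : ℕ, Even p ∧ Odd q ∧ IsInfinityGraph M.graph p q ∧
    OddCyclesSig M Odd ∧ EvenCyclesSig M (fun n s => s % 4 = n % 4)

/-- The family 𝔛₂ : mixed θ(p,l,q)-graphs, p even, l q odd, whose two odd cycles have odd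
signatures and whose even cycle C̃_{q+l-2} satisfies q + l + σ ≡ 2 (mod 4). -/
def MemX2 (M : MixedGraph V) : Prop :=
  ∃ p l q : ℕ, Even p ∧ Odd l ∧ Odd q ∧ IsThetaGraph M.graph p l q ∧
    OddCyclesSig M Odd ∧ EvenCyclesSig M (fun _ s => (q + l + s) % 4 = 2)

/-- The family 𝔊₂ = 𝔊₀ ∪ 𝔛₁ ∪ 𝔛₂ together with the mixed odd cycles of odd signature. -/
def MemG2 [Fintype V] [DecidableEq V] (M : MixedGraph V) : Prop :=
  MemG0 M ∨ MemX1 M ∨ MemX2 M ∨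
    (IsCycleMG M ∧ Odd (Nat.card V) ∧ CycleSig M ⊤ Odd)

/-- The family 𝔜₁. -/
def MemY1 (M : MixedGraph V) : Prop :=
  ∃ p q : ℕ, Even p ∧ Odd q ∧ IsInfinityGraph M.graph p q ∧
    OddCyclesSig M Even ∧ EvenCyclesSig M (fun n s => s % 4 = n % 4)

/-- The family 𝔜₂. -/
def MemY2 (M : MixedGraph V) : Prop :=
  ∃ p l q : ℕ, Even p ∧ Odd l ∧ Odd q ∧ IsThetaGraph M.graph p l q ∧
    OddCyclesSig M Even ∧ EvenCyclesSig M (fun _ s => (q + l + s) % 4 = 2)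

/-- `M` is a disjoint union of `k` even cycles and one odd cycle with even signature. -/
def IsDisjointUnionEvenCyclesOddCycleEvenSig (M : MixedGraph V) (k : ℤ) : Prop :=
  (∀ c : M.graph.ConnectedComponent, IsCycleMG (M.comp c)) ∧
  (({c : M.graph.ConnectedComponent | Even (Nat.card c.supp)}.ncard : ℤ) = k) ∧
  (∃! c : M.graph.ConnectedComponent, Odd (Nat.card c.supp)) ∧
  (∀ c : M.graph.ConnectedComponent, Odd (Nat.card c.supp) →
    CycleSig (M.comp c) ⊤ Even)

/-- The family 𝔉₀. -/
def MemF0 [Fintype V] [DecidableEq V] (M : MixedGraph V) : Prop :=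
  M.graph.Connected ∧ 2 ≤ cyclomatic M.graph ∧ CyclesVertexDisjoint M.graph ∧
  NoPendantVerts M.graph ∧
  (∃ (C₀ : M.graph.Subgraph) (x₀ : V), IsPendantCycle M.graph C₀ x₀ ∧ Odd C₀.verts.ncard ∧
    CycleSig M C₀ Even ∧
    ∀ C : M.graph.Subgraph, IsCycleSubgraph C → C ≠ C₀ →
      Even C.verts.ncard ∧ CycleSig M C (fun s => s % 4 = C.verts.ncard % 4)) ∧
  (∃ (Cq : M.graph.Subgraph) (x : V), IsPendantCycle M.graph Cq x ∧ Even Cq.verts.ncard ∧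
    ∃ S : Set ↥(Cq.vertsᶜ ∪ {x}),
      PendantReaches (M.induce (Cq.vertsᶜ ∪ {x})).graph S ∧
      NoPendantIn (M.induce (Cq.vertsᶜ ∪ {x})).graph S ∧
      IsDisjointUnionEvenCyclesOddCycleEvenSig
        ((M.induce (Cq.vertsᶜ ∪ {x})).induce S)
        (cyclomatic (M.induce (Cq.vertsᶜ ∪ {x})).graph))

/-- The family 𝔉₂ = 𝔉₀ ∪ 𝔜₁ ∪ 𝔜₂ together with the mixed odd cycles of even signature. -/
def MemF2 [Fintype V] [DecidableEq V] (M : MixedGraph V) : Prop :=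
  MemF0 M ∨ MemY1 M ∨ MemY2 M ∨
    (IsCycleMG M ∧ Odd (Nat.card V) ∧ CycleSig M ⊤ Even)

/-- A connected component that is either an even cycle C̃_q with σ ≡ q (mod 4),
or an isolated vertex. -/
def GoodOtherComp (M : MixedGraph V) : Prop :=
  (IsCycleMG M ∧ Even (Nat.card V) ∧
    CycleSig M ⊤ (fun s => s % 4 = (Nat.card V) % 4)) ∨
  Nat.card V = 1

/-- A fractional matching of `G`, given as a weight function on `Sym2 V` vanishing
outside the edge set. -/
def IsFracMatching [Fintype V] [DecidableEq V] (G : SimpleGraph V) (f : Sym2 V → ℝ) : Prop :=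
  (∀ e ∈ G.edgeSet, 0 ≤ f e ∧ f e ≤ 1) ∧ (∀ e, e ∉ G.edgeSet → f e = 0) ∧
    ∀ v : V, ∑ e ∈ Finset.univ.filter (fun e : Sym2 V => v ∈ e), f e ≤ 1

/-- The fractional matching number m*(G). -/
noncomputable def fracMatchingNumber [Fintype V] [DecidableEq V] (G : SimpleGraph V) : ℝ :=
  sSup {x : ℝ | ∃ f : Sym2 V → ℝ, IsFracMatching G f ∧ ∑ e : Sym2 V, f e = x}

/-- Membership in the family ℱ : fractional matchings of total weight m*(G) taking
values in {0, 1/2, 1}. -/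
def InOptFamily [Fintype V] [DecidableEq V] (G : SimpleGraph V) (f : Sym2 V → ℝ) : Prop :=
  IsFracMatching G f ∧ (∑ e : Sym2 V, f e) = fracMatchingNumber G ∧
    ∀ e : Sym2 V, f e = 0 ∨ f e = 1 / 2 ∨ f e = 1

/-- An optimal fractional matching: a member of ℱ with the largest number of
edges of weight 1. -/
def IsOptFracMatching [Fintype V] [DecidableEq V] (G : SimpleGraph V) (f : Sym2 V → ℝ) : Prop :=
  InOptFamily G f ∧
    ∀ g : Sym2 V → ℝ, InOptFamily G g →
      {e : Sym2 V | g e = 1}.ncard ≤ {e : Sym2 V | f e = 1}.ncard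

/-- E₁(C) : the edges of `G` with exactly one endpoint on the cycle `C`. -/
def cutEdges (G : SimpleGraph V) (C : G.Subgraph) : Set (Sym2 V) :=
  {e | e ∈ G.edgeSet ∧ ∃ a b : V, e = s(a, b) ∧ a ∈ C.verts ∧ b ∉ C.verts}



/-- Combinatorial coordinates on a theta graph: three paths `x t 0, …, x t (n t)`. -/
structure Th (G : SimpleGraph V) (n : Fin 3 → ℕ) (x : Fin 3 → ℕ → V) : Prop where
  adj : ∀ t i, i < n t → G.Adj (x t i) (x t (i+1))
  inj : ∀ t t' i j, i ≤ n t → j ≤ n t' → x t i = x t' j →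
    (t = t' ∧ i = j) ∨ (i = 0 ∧ j = 0) ∨ (i = n t ∧ j = n t')
  zero : ∀ t t', x t 0 = x t' 0
  last : ∀ t t', x t (n t) = x t' (n t')
  cover : ∀ v, ∃ t i, i ≤ n t ∧ x t i = v
  edge : ∀ u v, G.Adj u v → ∃ t i, i < n t ∧ s(u, v) = s(x t i, x t (i+1))
  odd0 : Odd (n 0)
  even1 : Even (n 1)
  even2 : Even (n 2)
  pos : ∀ t, 0 < n t

namespace Th

variable {G : SimpleGraph V} {n : Fin 3 → ℕ} {x : Fin 3 → ℕ → V}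

lemma two_le (h : Th G n x) {t t' : Fin 3} (htt : t ≠ t') : ¬ (n t = 1 ∧ n t' = 1) := by
  have h1 := h.even1
  have h2 := h.even2
  rintro ⟨ha, hb⟩
  fin_cases t <;> fin_cases t' <;> simp_all

lemma ends (h : Th G n x) (t t' : Fin 3) : x t 0 ≠ x t' (n t') := by
  intro he
  have := h.pos t
  have := h.pos t'
  have := h.inj t t' 0 (n t') (by omega) le_rfl he
  omega

lemma eq_zero (h : Th G n x) {t t' : Fin 3} {i : ℕ} (hi : i ≤ n t) (he : x t i = x t' 0) :
    i = 0 := by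
  have := h.pos t
  have := h.pos t'
  have := h.inj t t' i 0 hi (by omega) he
  omega

lemma eq_last (h : Th G n x) {t t' : Fin 3} {i : ℕ} (hi : i ≤ n t) (he : x t i = x t' (n t')) :
    i = n t := by
  have := h.pos t
  have := h.pos t'
  rcases h.inj t t' i (n t') hi (by omega) he with ⟨rfl, h⟩ | h | h <;> omega

lemma eq_int (h : Th G n x) {t t' : Fin 3} {i j : ℕ} (hi : i ≤ n t) (hj : j ≤ n t')
    (he : x t i = x t' j) (h0 : 0 < i) (h1 : i < n t) : t = t' ∧ i = j := by
  rcases h.inj t t' i j hi hj he with h | h | h <;> omega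

lemma nbr_int (h : Th G n x) {t : Fin 3} {i : ℕ} (hi : i + 1 < n t) (v : V) :
    G.Adj (x t (i+1)) v ↔ v = x t i ∨ v = x t (i+2) := by
  constructor
  · intro ha
    obtain ⟨t', j, hj, he⟩ := h.edge _ _ ha
    rw [Sym2.eq_iff] at he
    rcases he with ⟨h1, h2⟩ | ⟨h1, h2⟩
    · obtain ⟨rfl, rfl⟩ := h.eq_int (by omega) (by omega) h1 (by omega) hi
      exact Or.inr h2
    · obtain ⟨rfl, h3⟩ := h.eq_int (by omega) (by omega) h1 (by omega) hi
      obtain rfl : i = j := by omega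
      exact Or.inl h2
  · rintro (rfl | rfl)
    · exact (h.adj t i (by omega)).symm
    · exact h.adj t (i+1) hi

lemma nbr_zero (h : Th G n x) (t₀ : Fin 3) (v : V) :
    G.Adj (x t₀ 0) v ↔ ∃ t, v = x t 1 := by
  constructor
  · intro ha
    obtain ⟨t', j, hj, he⟩ := h.edge _ _ ha
    rw [Sym2.eq_iff] at he
    rcases he with ⟨h1, h2⟩ | ⟨h1, h2⟩
    · have := h.eq_zero (by omega) h1.symm
      subst this
      exact ⟨t', h2⟩
    · have := h.eq_zero (by omega) h1.symm
      omega
  · rintro ⟨t, rfl⟩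
    rw [h.zero t₀ t]
    exact h.adj t 0 (h.pos t)

lemma nbr_last (h : Th G n x) (t₀ : Fin 3) (v : V) :
    G.Adj (x t₀ (n t₀)) v ↔ ∃ t, v = x t (n t - 1) := by
  constructor
  · intro ha
    obtain ⟨t', j, hj, he⟩ := h.edge _ _ ha
    rw [Sym2.eq_iff] at he
    rcases he with ⟨h1, h2⟩ | ⟨h1, h2⟩
    · have := h.eq_last (by omega) h1.symm
      omega
    · have := h.eq_last (by omega) h1.symm
      refine ⟨t', ?_⟩
      rw [h2]; congr 1; omega
  · rintro ⟨t, rfl⟩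
    rw [h.last t₀ t]
    have := h.adj t (n t - 1) (by have := h.pos t; omega)
    rw [Nat.sub_add_cancel (h.pos t)] at this
    exact this.symm

lemma inj_one (h : Th G n x) : Function.Injective (fun t => x t 1) := by
  intro t t' he
  by_contra hne
  have := h.two_le hne
  have := h.inj t t' 1 1 (h.pos t) (h.pos t') he
  omega

lemma inj_pen (h : Th G n x) : Function.Injective (fun t => x t (n t - 1)) := by
  intro t t' he
  by_contra hne
  have := h.two_le hne
  have := h.pos t
  have := h.pos t'
  have := h.inj t t' _ _ (by omega) (by omega) he
  omega

lemma extend (h : Th G n x) {α : Type*} (F : Fin 3 → ℕ → α) (h0 : ∀ t t', F t 0 = F t' 0)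
    (h1 : ∀ t t', F t (n t) = F t' (n t')) : ∃ f : V → α, ∀ t i, i ≤ n t → f (x t i) = F t i := by
  choose T I hI hx using h.cover
  refine ⟨fun v => F (T v) (I v), fun t i hi => ?_⟩
  rcases h.inj _ _ _ _ (hI (x t i)) hi (hx (x t i)) with ⟨h2, h3⟩ | ⟨h2, h3⟩ | ⟨h2, h3⟩
  · change F (T _) (I _) = _
    rw [h3, h2]
  · change F (T _) (I _) = _
    rw [h2, h3]; exact h0 _ _
  · change F (T _) (I _) = _
    rw [h2, h3]; exact h1 _ _

section sums
variable [Fintype V] {H : V → V → ℂ} (hH : ∀ u v, ¬ G.Adj u v → H u v = 0) (f : V → ℂ)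

lemma sum_int (h : Th G n x) (hH : ∀ u v, ¬ G.Adj u v → H u v = 0) (f : V → ℂ)
    {t : Fin 3} {i : ℕ} (hi : i + 1 < n t) :
    ∑ w, H (x t (i+1)) w * f w =
      H (x t (i+1)) (x t i) * f (x t i) + H (x t (i+1)) (x t (i+2)) * f (x t (i+2)) := by
  have hne : x t i ≠ x t (i+2) := by
    intro he
    have := h.inj t t _ _ (by omega) (by omega) he
    omega
  rw [← Finset.sum_pair hne (f := fun w => H (x t (i+1)) w * f w)]
  symm
  apply Finset.sum_subset (Finset.subset_univ _)
  intro w _ hw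
  rw [hH, zero_mul]
  rw [h.nbr_int hi]
  simpa using hw

lemma sum_zero (h : Th G n x) (hH : ∀ u v, ¬ G.Adj u v → H u v = 0) (f : V → ℂ) (t₀ : Fin 3) :
    ∑ w, H (x t₀ 0) w * f w = ∑ t, H (x t 0) (x t 1) * f (x t 1) := by
  have : ∀ t, H (x t 0) (x t 1) * f (x t 1) = (fun w => H (x t₀ 0) w * f w) (x t 1) := by
    intro t; simp only [h.zero t t₀]
  simp_rw [this]
  rw [← Finset.sum_image (g := fun t => x t 1) (f := fun w => H (x t₀ 0) w * f w)
    (fun a _ b _ e => h.inj_one e)]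
  symm
  apply Finset.sum_subset (Finset.subset_univ _)
  intro w _ hw
  rw [hH, zero_mul]
  rw [h.nbr_zero]
  rintro ⟨t, rfl⟩
  simp at hw

lemma sum_last (h : Th G n x) (hH : ∀ u v, ¬ G.Adj u v → H u v = 0) (f : V → ℂ) (t₀ : Fin 3) :
    ∑ w, H (x t₀ (n t₀)) w * f w =
      ∑ t, H (x t (n t)) (x t (n t - 1)) * f (x t (n t - 1)) := by
  have : ∀ t, H (x t (n t)) (x t (n t - 1)) * f (x t (n t - 1)) =
      (fun w => H (x t₀ (n t₀)) w * f w) (x t (n t - 1)) := by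
    intro t; simp only [h.last t t₀]
  simp_rw [this]
  rw [← Finset.sum_image (g := fun t => x t (n t - 1)) (f := fun w => H (x t₀ (n t₀)) w * f w)
    (fun a _ b _ e => h.inj_pen e)]
  symm
  apply Finset.sum_subset (Finset.subset_univ _)
  intro w _ hw
  rw [hH, zero_mul]
  rw [h.nbr_last]
  rintro ⟨t, rfl⟩
  simp at hw

end sums

end Th

/-- Signed arc indicator. -/
def sgnArc (M : MixedGraph V) (u v : V) : ℤ :=
  (if M.arc u v then 1 else 0) - (if M.arc v u then 1 else 0)

lemma sgnArc_swap (M : MixedGraph V) (u v : V) : sgnArc M v u = - sgnArc M u v := by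
  unfold sgnArc; ring

lemma hMatrix_adj [Fintype V] [DecidableEq V] (M : MixedGraph V) {u v : V}
    (h : M.graph.Adj u v) : M.hMatrix u v = Complex.I ^ (sgnArc M u v) := by
  unfold MixedGraph.hMatrix sgnArc
  by_cases h1 : M.arc u v
  · have := M.arc_antisymm u v h1
    simp [h1, this]
  · by_cases h2 : M.arc v u <;> simp [h1, h2, h]

lemma hMatrix_not_adj [Fintype V] [DecidableEq V] (M : MixedGraph V) {u v : V}
    (h : ¬ M.graph.Adj u v) : M.hMatrix u v = 0 := by
  unfold MixedGraph.hMatrix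
  have h1 : ¬ M.arc u v := fun h' => h (M.arc_adj u v h')
  have h2 : ¬ M.arc v u := fun h' => h (M.arc_adj v u h').symm
  simp [h1, h2, h]

/-- Signed arc sum along a walk. -/
def walkSum (s : V → V → ℤ) {G : SimpleGraph V} {u v : V} (w : G.Walk u v) : ℤ :=
  (w.darts.map fun d => s d.toProd.1 d.toProd.2).sum

lemma walkSignature_eq (M : MixedGraph V) {u : V} (w : M.graph.Walk u u) :
    walkSignature M w = (walkSum (sgnArc M) w).natAbs := by
  unfold walkSignature walkSum
  congr 1
  induction w.darts with
  | nil => simp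
  | cons d l ih =>
    rw [List.map_cons, List.sum_cons, ← ih, List.countP_cons, List.countP_cons, sgnArc]
    push_cast
    ring

lemma walkSum_append (s : V → V → ℤ) {G : SimpleGraph V} {u v w : V} (p : G.Walk u v)
    (q : G.Walk v w) : walkSum s (p.append q) = walkSum s p + walkSum s q := by
  simp [walkSum]

lemma walkSum_reverse (s : V → V → ℤ) (hs : ∀ u v, s v u = - s u v) {G : SimpleGraph V} {u v : V}
    (p : G.Walk u v) : walkSum s p.reverse = - walkSum s p := by
  unfold walkSum
  rw [SimpleGraph.Walk.darts_reverse, List.map_reverse, List.sum_reverse, List.map_map]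
  induction p.darts with
  | nil => simp
  | cons d l ih =>
    simp only [List.map_cons, List.sum_cons, ih, Function.comp]
    have := hs d.toProd.1 d.toProd.2
    simp [this]
    ring

lemma walkSum_eq (s : V → V → ℤ) {G : SimpleGraph V} {u v : V} (p : G.Walk u v) :
    walkSum s p = ∑ i ∈ Finset.range p.length, s (p.getVert i) (p.getVert (i+1)) := by
  induction p with
  | nil => simp [walkSum]
  | cons h p ih =>
    rw [SimpleGraph.Walk.length_cons, Finset.sum_range_succ', add_comm]
    simp only [SimpleGraph.Walk.getVert_cons_succ]
    rw [← ih]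
    simp [walkSum]

lemma walkSum_potential (φ : V → ℤ) {G : SimpleGraph V} {u v : V} (p : G.Walk u v) :
    walkSum (fun a b => φ b - φ a) p = φ v - φ u := by
  induction p with
  | nil => simp [walkSum]
  | cons h p ih =>
    simp only [walkSum, SimpleGraph.Walk.darts_cons, List.map_cons, List.sum_cons] at ih ⊢
    rw [ih]; ring

lemma walkSum_sub (s r : V → V → ℤ) {G : SimpleGraph V} {u v : V} (p : G.Walk u v) :
    walkSum (fun a b => s a b - r a b) p = walkSum s p - walkSum r p := by
  unfold walkSum
  induction p.darts with
  | nil => simp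
  | cons d l ih => simp only [List.map_cons, List.sum_cons, ih]; ring

/-- A trail through edge `ab`, all of whose other edges have weight zero. -/
lemma walkSum_single (s : V → V → ℤ) (hs : ∀ u v, s v u = - s u v) {G : SimpleGraph V}
    {u v a b : V} (p : G.Walk u v) (hp : p.edges.Nodup) (hab : s(a, b) ∈ p.edges)
    (h0 : ∀ c d, s(c, d) ∈ p.edges → s(c, d) ≠ s(a, b) → s c d = 0) :
    (walkSum s p).natAbs = (s a b).natAbs := by
  have key : ∀ l : List G.Dart, (l.map (·.edge)).Nodup →
      (∀ d ∈ l, d.edge ≠ s(a, b) → s d.toProd.1 d.toProd.2 = 0) →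
      ((l.map fun d => s d.toProd.1 d.toProd.2).sum).natAbs =
        if s(a, b) ∈ l.map (·.edge) then (s a b).natAbs else 0 := by
    intro l
    induction l with
    | nil => simp
    | cons d l ih =>
      intro hn h0
      simp only [List.map_cons, List.nodup_cons, List.sum_cons, List.mem_cons] at hn h0 ⊢
      have ih' := ih hn.2 (fun d' hd' => h0 d' (Or.inr hd'))
      by_cases hd : d.edge = s(a, b)
      · rw [if_neg (by rw [← hd]; exact hn.1)] at ih'
        rw [if_pos (Or.inl hd.symm)]
        have hz : (l.map fun d => s d.toProd.1 d.toProd.2).sum = 0 := by omega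
        rw [hz, add_zero]
        have : s(d.toProd.1, d.toProd.2) = s(a, b) := hd
        rw [Sym2.eq_iff] at this
        rcases this with ⟨h1, h2⟩ | ⟨h1, h2⟩
        · rw [h1, h2]
        · rw [h1, h2, hs a b, Int.natAbs_neg]
      · rw [h0 d (Or.inl rfl) hd, zero_add, ih']
        have : s(a, b) ≠ d.edge := fun e => hd e.symm
        simp [this]
  have := key p.darts hp (fun d hd hne =>
    h0 _ _ (by exact List.mem_map_of_mem (f := fun d : G.Dart => d.edge) hd) hne)
  unfold walkSum
  rw [this]
  exact if_pos hab

lemma matching_card [Fintype V] {G : SimpleGraph V} (N : G.Subgraph) (hN : N.IsMatching) :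
    2 * N.edgeSet.ncard = N.verts.ncard := by
  have h1 : Fintype.card N.verts = 2 * N.coe.edgeFinset.card := by
    rw [← SimpleGraph.sum_degrees_eq_twice_card_edges N.coe, ← Finset.card_univ,
      Finset.card_eq_sum_ones]
    refine Finset.sum_congr rfl (fun v _ => ?_)
    symm
    rw [SimpleGraph.Subgraph.coe_degree]
    convert (SimpleGraph.Subgraph.isMatching_iff_forall_degree.mp hN) v v.2
  have h3 : N.edgeSet.ncard = N.coe.edgeFinset.card := by
    rw [← N.image_coe_edgeSet_coe, Set.ncard_image_of_injective _
      (Sym2.map.injective Subtype.val_injective), ← SimpleGraph.coe_edgeFinset,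
      Set.ncard_coe_finset]
  rw [h3, ← h1, ← Nat.card_coe_set_eq, Nat.card_eq_fintype_card]

namespace Th
variable {G : SimpleGraph V} {n : Fin 3 → ℕ} {x : Fin 3 → ℕ → V}

/-- The perfect matching of the theta graph. -/
def pm (h : Th G n x) : G.Subgraph where
  verts := Set.univ
  Adj u v := ∃ t i, i < n t ∧ (Odd i ↔ t ≠ 1) ∧ s(u, v) = s(x t i, x t (i+1))
  adj_sub := by
    rintro u v ⟨t, i, hi, -, he⟩
    have := h.adj t i hi
    rw [← SimpleGraph.mem_edgeSet] at this ⊢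
    rwa [he]
  edge_vert := fun _ => Set.mem_univ _
  symm := ⟨by
    rintro u v ⟨t, i, hi, ho, he⟩
    exact ⟨t, i, hi, ho, by rw [← he, Sym2.eq_swap]⟩⟩

lemma pm_isMatching (h : Th G n x) : h.pm.IsMatching := by
  have e0 := h.odd0
  have e1 := h.even1
  have e2 := h.even2
  have p0 := h.pos 0
  have p1 := h.pos 1
  have p2 := h.pos 2
  intro v _
  apply existsUnique_of_exists_of_unique
  · obtain ⟨t, i, hi, rfl⟩ := h.cover v
    -- endpoints
    by_cases hi0 : i = 0
    · subst hi0
      refine ⟨x 1 1, 1, 0, p1, by simp, ?_⟩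
      rw [h.zero t 1]
    by_cases hin : i = n t
    · subst hin
      refine ⟨x 2 (n 2 - 1), 2, n 2 - 1, by omega, ?_, ?_⟩
      · simp only [ne_eq, Fin.reduceEq, not_false_eq_true, iff_true]
        grind
      · rw [h.last t 2, Sym2.eq_swap, Nat.sub_add_cancel p2]
    by_cases hp : (Odd i ↔ t ≠ 1)
    · exact ⟨x t (i+1), t, i, by omega, hp, rfl⟩
    · refine ⟨x t (i-1), t, i-1, by omega, ?_, ?_⟩
      · grind
      · rw [Sym2.eq_swap, Nat.sub_add_cancel (by omega)]
  · rintro y z ⟨t, i, hi, ho, he⟩ ⟨t', j, hj, ho', he'⟩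
    have par : ∀ (t : Fin 3), (t = 0 ∧ Odd (n t)) ∨ (t = 1 ∧ Even (n t)) ∨
        (t = 2 ∧ Even (n t)) := by
      intro t; fin_cases t <;> simp_all
    have P := par t
    have P' := par t'
    rw [Sym2.eq_iff] at he he'
    have key : ∀ i' j', i' ≤ n t → j' ≤ n t' → (i' = i ∨ i' = i + 1) → (j' = j ∨ j' = j+1) →
        x t i' = x t' j' → t = t' ∧ i' = j' ∧ i = j := by
      intro i' j' h1 h2 h3 h4 h5
      have h6 := h.inj _ _ _ _ h1 h2 h5
      clear he he' h5 par
      rcases P with ⟨rfl, P⟩ | ⟨rfl, P⟩ | ⟨rfl, P⟩ <;>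
        rcases P' with ⟨rfl, P'⟩ | ⟨rfl, P'⟩ | ⟨rfl, P'⟩ <;>
        simp [Nat.odd_iff, Nat.even_iff] at ho ho' P P' h6 ⊢ <;> omega
    rcases he with ⟨h1, h2⟩ | ⟨h1, h2⟩ <;> rcases he' with ⟨h3, h4⟩ | ⟨h3, h4⟩
    · obtain ⟨rfl, h5, rfl⟩ := key i j (by omega) (by omega) (by omega) (by omega)
        (h1.symm.trans h3)
      rw [h2, h4]
    · obtain ⟨rfl, h5, rfl⟩ := key i (j+1) (by omega) (by omega) (by omega) (by omega)
        (h1.symm.trans h3)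
      omega
    · obtain ⟨rfl, h5, rfl⟩ := key (i+1) j (by omega) (by omega) (by omega) (by omega)
        (h1.symm.trans h3)
      omega
    · obtain ⟨rfl, h5, rfl⟩ := key (i+1) (j+1) (by omega) (by omega) (by omega) (by omega)
        (h1.symm.trans h3)
      rw [h2, h4]

lemma two_mul_matchingNumber [Fintype V] (h : Th G n x) :
    2 * matchingNumber G = Fintype.card V := by
  have hpm := matching_card h.pm h.pm_isMatching
  have hv : h.pm.verts = Set.univ := rfl
  rw [hv, Set.ncard_univ, Nat.card_eq_fintype_card] at hpm
  rw [← hpm]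
  congr 1
  unfold matchingNumber
  apply le_antisymm
  · refine csSup_le ⟨h.pm.edgeSet.ncard, h.pm, h.pm_isMatching, rfl⟩ ?_
    rintro k ⟨N, hN, rfl⟩
    have h1 := matching_card N hN
    have h2 : N.verts.ncard ≤ Fintype.card V := by
      rw [← Nat.card_eq_fintype_card]; exact Set.ncard_le_card _
    omega
  · apply le_csSup
    · refine ⟨Fintype.card V, ?_⟩
      rintro k ⟨N, hN, rfl⟩
      have h1 := matching_card N hN
      have h2 : N.verts.ncard ≤ Fintype.card V := by
        rw [← Nat.card_eq_fintype_card]; exact Set.ncard_le_card _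
      omega
    · exact ⟨h.pm, h.pm_isMatching, rfl⟩

end Th

namespace Th
variable {M : MixedGraph V} {n : Fin 3 → ℕ} {x : Fin 3 → ℕ → V}

/-- Partial signed arc sums along a path. -/
def pot (M : MixedGraph V) (x : Fin 3 → ℕ → V) (t : Fin 3) (i : ℕ) : ℤ :=
  ∑ j ∈ Finset.range i, sgnArc M (x t j) (x t (j+1))

lemma pot_zero (t : Fin 3) : pot M x t 0 = 0 := by simp [pot]

lemma pot_succ (t : Fin 3) (i : ℕ) :
    pot M x t (i+1) = pot M x t i + sgnArc M (x t i) (x t (i+1)) := by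
  simp [pot, Finset.sum_range_succ]

/-- Endpoint gauge factor. -/
noncomputable def gam (M : MixedGraph V) (n : Fin 3 → ℕ) (x : Fin 3 → ℕ → V) (t : Fin 3) : ℂ :=
  Complex.I ^ ((n t : ℤ) - pot M x t (n t))

lemma gam_ne (t : Fin 3) : gam M n x t ≠ 0 := zpow_ne_zero _ Complex.I_ne_zero

lemma I_comb (a b c : ℤ) (k : ℂ) (h : a + b = c) :
    Complex.I ^ a * (Complex.I ^ b * k) = Complex.I ^ c * k := by
  rw [← mul_assoc, ← zpow_add₀ Complex.I_ne_zero, h]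

section
variable [Fintype V] [DecidableEq V]

lemma row_int (h : Th M.graph n x) (f : V → ℂ) (k : Fin 3 → ℕ → ℂ)
    (hk : ∀ t i, i ≤ n t → f (x t i) = Complex.I ^ ((i : ℤ) - pot M x t i) * k t i)
    {t : Fin 3} {i : ℕ} (hi : i + 1 < n t) :
    ∑ w, M.hMatrix (x t (i+1)) w * f w =
      Complex.I ^ ((i : ℤ) - pot M x t (i+1)) * (k t i - k t (i+2)) := by
  rw [h.sum_int (H := M.hMatrix) (fun u v => hMatrix_not_adj M) f hi,
    hMatrix_adj M (h.adj t i (by omega)).symm, hMatrix_adj M (h.adj t (i+1) hi),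
    hk t i (by omega), hk t (i+2) (by omega),
    I_comb _ _ ((i : ℤ) - pot M x t (i+1)) _ (by rw [sgnArc_swap, pot_succ]; ring),
    I_comb _ _ ((i : ℤ) - pot M x t (i+1) + 2) _
      (by rw [pot_succ t (i+1)]; push_cast; ring),
    zpow_add₀ Complex.I_ne_zero]
  have : Complex.I ^ (2 : ℤ) = -1 := by
    rw [show (2 : ℤ) = ((2 : ℕ) : ℤ) from rfl, zpow_natCast, Complex.I_sq]
  rw [this]; ring

lemma row_zero (h : Th M.graph n x) (f : V → ℂ) (k : Fin 3 → ℕ → ℂ)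
    (hk : ∀ t i, i ≤ n t → f (x t i) = Complex.I ^ ((i : ℤ) - pot M x t i) * k t i)
    (t₀ : Fin 3) :
    ∑ w, M.hMatrix (x t₀ 0) w * f w = Complex.I * ∑ t, k t 1 := by
  rw [h.sum_zero (H := M.hMatrix) (fun u v => hMatrix_not_adj M) f, Finset.mul_sum]
  refine Finset.sum_congr rfl fun t _ => ?_
  rw [hMatrix_adj M (h.adj t 0 (h.pos t)), hk t 1 (h.pos t),
    I_comb _ _ 1 _ (by rw [pot_succ, pot_zero]; push_cast; ring), zpow_one]

lemma row_last (h : Th M.graph n x) (f : V → ℂ) (k : Fin 3 → ℕ → ℂ)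
    (hk : ∀ t i, i ≤ n t → f (x t i) = Complex.I ^ ((i : ℤ) - pot M x t i) * k t i)
    (t₀ : Fin 3) :
    ∑ w, M.hMatrix (x t₀ (n t₀)) w * f w =
      Complex.I⁻¹ * ∑ t, gam M n x t * k t (n t - 1) := by
  rw [h.sum_last (H := M.hMatrix) (fun u v => hMatrix_not_adj M) f, Finset.mul_sum]
  refine Finset.sum_congr rfl fun t _ => ?_
  obtain ⟨m, hm⟩ : ∃ m, n t = m + 1 := ⟨n t - 1, by have := h.pos t; omega⟩
  unfold gam
  rw [hm, Nat.add_sub_cancel, hMatrix_adj M (h.adj t m (by omega)).symm, hk t m (by omega),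
    ← zpow_neg_one, I_comb (-1) _ ((m : ℤ) - pot M x t (m+1)) _ (by push_cast; ring),
    I_comb _ _ ((m : ℤ) - pot M x t (m+1)) _ (by rw [sgnArc_swap, pot_succ]; ring)]

/-- The values along the paths of a kernel vector. -/
def Form (M : MixedGraph V) (n : Fin 3 → ℕ) (x : Fin 3 → ℕ → V) (f : V → ℂ) (A : ℂ)
    (s : Fin 3 → ℂ) : Prop :=
  ∀ t i, i ≤ n t →
    f (x t i) = Complex.I ^ ((i : ℤ) - pot M x t i) * (if Even i then A else s t)

/-- The reduced linear system. -/
def Sys (M : MixedGraph V) (n : Fin 3 → ℕ) (x : Fin 3 → ℕ → V) (A : ℂ) (s : Fin 3 → ℂ) : Prop :=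
  s 0 + s 1 + s 2 = 0 ∧
    gam M n x 0 * A + gam M n x 1 * s 1 + gam M n x 2 * s 2 = 0 ∧
    gam M n x 0 * s 0 = gam M n x 1 * A ∧ gam M n x 1 * A = gam M n x 2 * A

lemma parities (h : Th M.graph n x) : ¬ Even (n 0) ∧ Even (n 0 - 1) ∧ ¬ Even (n 1 - 1) ∧
    ¬ Even (n 2 - 1) := by
  have := h.odd0
  have := h.even1
  have := h.even2
  have := h.pos 1
  have := h.pos 2
  grind

lemma ker_form (h : Th M.graph n x) (f : V → ℂ) (hf : M.hMatrix.mulVec f = 0) :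
    ∃ A s, Form M n x f A s ∧ Sys M n x A s := by
  have hrow : ∀ u, ∑ w, M.hMatrix u w * f w = 0 := fun u => congrFun hf u
  set k : Fin 3 → ℕ → ℂ := fun t i => Complex.I ^ (pot M x t i - (i : ℤ)) * f (x t i) with hkdef
  have hk : ∀ t i, i ≤ n t → f (x t i) = Complex.I ^ ((i : ℤ) - pot M x t i) * k t i := by
    intro t i _
    rw [hkdef, I_comb _ _ 0 _ (by ring), zpow_zero, one_mul]
  have hI := Complex.I_ne_zero
  have hper : ∀ t i, i + 1 < n t → k t (i+2) = k t i := by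
    intro t i hi
    have h1 := h.row_int f k hk hi
    rw [hrow] at h1
    have h2 := (mul_eq_zero.mp h1.symm).resolve_left (zpow_ne_zero _ hI)
    exact (sub_eq_zero.mp h2).symm
  have hk0 : ∀ t, k t 0 = f (x 0 0) := by
    intro t
    simp only [hkdef, pot_zero]
    rw [h.zero t 0]; simp
  have hval : ∀ t i, i ≤ n t → k t i = if Even i then f (x 0 0) else k t 1 := by
    intro t i
    induction i using Nat.twoStepInduction with
    | zero => intro _; simp [hk0]
    | one => intro _; simp
    | more i ih _ =>
      intro hi
      rw [hper t i (by omega), ih (by omega)]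
      simp [Nat.even_add]
  have hform : Form M n x f (f (x 0 0)) (fun t => k t 1) := by
    intro t i hi
    rw [hk t i hi, ← hval t i hi]
  obtain ⟨q0, q1, q2, q3⟩ := h.parities
  have e1 := h.even1
  have e2 := h.even2
  have hl : ∀ t, f (x 0 (n 0)) = gam M n x t * k t (n t) := by
    intro t
    rw [h.last 0 t, hk t (n t) le_rfl, gam]
  refine ⟨_, _, hform, ?_, ?_, ?_, ?_⟩
  · have h1 := h.row_zero f k hk 0
    rw [hrow] at h1
    have h2 := (mul_eq_zero.mp h1.symm).resolve_left hI
    rwa [Fin.sum_univ_three] at h2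
  · have h1 := h.row_last f k hk 0
    rw [hrow] at h1
    have h2 := (mul_eq_zero.mp h1.symm).resolve_left (inv_ne_zero hI)
    rw [Fin.sum_univ_three, hval 0 _ (by omega), hval 1 _ (by omega), hval 2 _ (by omega),
      if_pos q1, if_neg q2, if_neg q3] at h2
    exact h2
  · have a0 := hl 0
    have a1 := hl 1
    rw [hval _ _ le_rfl, if_neg q0] at a0
    rw [hval _ _ le_rfl, if_pos e1] at a1
    rw [← a0, ← a1]
  · have a0 := hl 2
    have a1 := hl 1
    rw [hval _ _ le_rfl, if_pos e2] at a0
    rw [hval _ _ le_rfl, if_pos e1] at a1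
    rw [← a0, ← a1]

lemma form_ker (h : Th M.graph n x) (A : ℂ) (s : Fin 3 → ℂ) (hs : Sys M n x A s) :
    ∃ f, Form M n x f A s ∧ M.hMatrix.mulVec f = 0 := by
  obtain ⟨s1, s2, s3, s4⟩ := hs
  obtain ⟨q0, q1, q2, q3⟩ := h.parities
  have e1 := h.even1
  have e2 := h.even2
  obtain ⟨f, hf⟩ := h.extend
    (fun t i => Complex.I ^ ((i : ℤ) - pot M x t i) * (if Even i then A else s t))
    (by intro t t'; simp [pot_zero])
    (by
      have key : ∀ t, Complex.I ^ ((n t : ℤ) - pot M x t (n t)) *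
          (if Even (n t) then A else s t) = gam M n x 1 * A := by
        intro t
        change gam M n x t * _ = _
        fin_cases t
        · simp only [Fin.zero_eta]; rw [if_neg q0, s3]
        · simp only [Fin.mk_one]; rw [if_pos e1]
        · simp only [Fin.reduceFinMk]; rw [if_pos e2, s4]
      intro t t'
      exact (key t).trans (key t').symm)
  have hform : Form M n x f A s := hf
  refine ⟨f, hform, ?_⟩
  funext u
  change ∑ w, M.hMatrix u w * f w = 0
  obtain ⟨t, i, hi, rfl⟩ := h.cover u
  have hk : ∀ t i, i ≤ n t → f (x t i) = Complex.I ^ ((i : ℤ) - pot M x t i) *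
      (fun t i => if Even i then A else s t) t i := hf
  by_cases hi0 : i = 0
  · subst hi0
    rw [h.row_zero f _ hk, Fin.sum_univ_three]
    simp [s1]
  by_cases hin : i = n t
  · subst hin
    rw [h.row_last f _ hk, Fin.sum_univ_three]
    rw [if_pos q1, if_neg q2, if_neg q3, s2, mul_zero]
  obtain ⟨j, rfl⟩ : ∃ j, i = j + 1 := ⟨i - 1, by omega⟩
  rw [h.row_int f _ hk (by omega)]
  simp [Nat.even_add]

lemma form_ext (h : Th M.graph n x) {f g : V → ℂ} {A : ℂ} {s : Fin 3 → ℂ}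
    (hf : Form M n x f A s) (hg : Form M n x g A s) : f = g := by
  funext v
  obtain ⟨t, i, hi, rfl⟩ := h.cover v
  rw [hf t i hi, hg t i hi]

lemma form_smul {f : V → ℂ} {A : ℂ} {s : Fin 3 → ℂ}
    (hf : Form M n x f A s) (c : ℂ) : Form M n x (c • f) (c * A) (fun t => c * s t) := by
  intro t i hi
  rw [Pi.smul_apply, hf t i hi, smul_eq_mul]
  split_ifs <;> ring

lemma form_one (h : Th M.graph n x) {f : V → ℂ} {A : ℂ} {s : Fin 3 → ℂ}
    (hf : Form M n x f A s) (h0 : f = 0) : A = 0 ∧ ∀ t, s t = 0 := by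
  have hI := Complex.I_ne_zero
  constructor
  · have := hf 0 0 (by omega)
    rw [h0] at this
    simpa [pot_zero] using this.symm
  · intro t
    have := hf t 1 (h.pos t)
    rw [h0, Pi.zero_apply, if_neg (by simp)] at this
    exact (mul_eq_zero.mp this.symm).resolve_left (zpow_ne_zero _ hI)

lemma finrank_ker (h : Th M.graph n x) :
    Module.finrank ℂ (LinearMap.ker M.hMatrix.mulVecLin) = 1 ↔
      gam M n x 1 = gam M n x 2 ∧ gam M n x 0 ^ 2 ≠ gam M n x 1 ^ 2 := by
  have g0 := gam_ne (M := M) (n := n) (x := x) 0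
  have g1 := gam_ne (M := M) (n := n) (x := x) 1
  have g2 := gam_ne (M := M) (n := n) (x := x) 2
  rw [finrank_eq_one_iff']
  constructor
  · rintro ⟨v, hv, hspan⟩
    have hv' : M.hMatrix.mulVec v.1 = 0 := v.2
    obtain ⟨A, s, hform, h1, h2, h3, h4⟩ := h.ker_form _ hv'
    have h12 : gam M n x 1 = gam M n x 2 := by
      by_contra hne
      have hA : A = 0 := by
        have : (gam M n x 1 - gam M n x 2) * A = 0 := by linear_combination h4
        exact (mul_eq_zero.mp this).resolve_left (sub_ne_zero.mpr hne)
      subst hA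
      have hs0 : s 0 = 0 := by simpa [g0] using h3
      have hs1 : s 1 = 0 := by
        have : (gam M n x 1 - gam M n x 2) * s 1 = 0 := by
          linear_combination h2 - gam M n x 2 * h1 + gam M n x 2 * hs0
        exact (mul_eq_zero.mp this).resolve_left (sub_ne_zero.mpr hne)
      have hs2 : s 2 = 0 := by linear_combination h1 - hs0 - hs1
      apply hv
      apply Subtype.ext
      refine h.form_ext hform (?_ : Form M n x 0 _ _)
      intro t i _
      have : s t = 0 := by fin_cases t <;> assumption
      simp [this]
    refine ⟨h12, fun hsq => ?_⟩
    obtain ⟨u1, hu1, ku1⟩ := h.form_ker 0 ![0, 1, -1] (by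
      refine ⟨?_, ?_, ?_, ?_⟩ <;> simp [h12])
    obtain ⟨u2, hu2, ku2⟩ := h.form_ker 1
        ![gam M n x 1 / gam M n x 0, - (gam M n x 1 / gam M n x 0), 0] (by
      refine ⟨?_, ?_, ?_, ?_⟩
      · simp
      · simp; field_simp; linear_combination hsq
      · simp; field_simp
      · simp [h12])
    obtain ⟨α, hα⟩ := hspan ⟨u1, ku1⟩
    obtain ⟨β, hβ⟩ := hspan ⟨u2, ku2⟩
    have hα' : α • v.1 = u1 := congrArg Subtype.val hα
    have hβ' : β • v.1 = u2 := congrArg Subtype.val hβ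
    have z1 : u1 (x 0 0) = 0 := by rw [hu1 0 0 (by omega)]; simp
    have z2 : u2 (x 0 0) = 1 := by rw [hu2 0 0 (by omega)]; simp [pot_zero]
    rw [← hα', Pi.smul_apply, smul_eq_mul] at z1
    rw [← hβ', Pi.smul_apply, smul_eq_mul] at z2
    rcases mul_eq_zero.mp z1 with h0 | h0
    · have : u1 = 0 := by rw [← hα', h0, zero_smul]
      have := (h.form_one hu1 this).2 1
      simp at this
    · rw [h0] at z2; simp at z2
  · rintro ⟨h12, hsq⟩
    obtain ⟨u1, hu1, ku1⟩ := h.form_ker 0 ![0, 1, -1] (by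
      refine ⟨?_, ?_, ?_, ?_⟩ <;> simp [h12])
    refine ⟨⟨u1, ku1⟩, ?_, ?_⟩
    · intro h0
      have h0' : u1 = 0 := congrArg Subtype.val h0
      have := (h.form_one hu1 h0').2 1
      simp at this
    · intro w
      have hw : M.hMatrix.mulVec w.1 = 0 := w.2
      obtain ⟨A, s, hform, h1, h2, h3, h4⟩ := h.ker_form _ hw
      have hA : A = 0 := by
        have : (gam M n x 0 ^ 2 - gam M n x 1 ^ 2) * A = 0 := by
          linear_combination gam M n x 0 * h2 + gam M n x 1 * h3 -
            gam M n x 0 * gam M n x 1 * h1 + gam M n x 0 * s 2 * h12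
        exact (mul_eq_zero.mp this).resolve_left (sub_ne_zero.mpr hsq)
      subst hA
      have hs0 : s 0 = 0 := by simpa [g0] using h3
      have hs2 : s 2 = - s 1 := by linear_combination h1 - hs0
      refine ⟨s 1, Subtype.ext ?_⟩
      refine h.form_ext (form_smul hu1 (s 1)) ?_
      convert hform using 1
      · simp
      · funext t
        fin_cases t
        · simp [hs0]
        · simp
        · simp [hs2]

lemma hRank_add (M : MixedGraph V) :
    M.hRank + Module.finrank ℂ (LinearMap.ker M.hMatrix.mulVecLin) = Fintype.card V := by
  have := LinearMap.finrank_range_add_finrank_ker M.hMatrix.mulVecLin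
  rw [Module.finrank_fintype_fun_eq_card] at this
  exact this

end
end Th

namespace Th

lemma of_isThetaGraph {G : SimpleGraph V} {p l q : ℕ} (hp : Even p) (hl : Odd l) (hq : Odd q)
    (hG : IsThetaGraph G p l q) :
    ∃ (a b : V) (W : Fin 3 → G.Walk a b), (∀ t, (W t).IsPath) ∧
      Th G (fun t => (W t).length) (fun t => (W t).getVert) ∧
      (W 0).length = p - 1 ∧ (W 1).length = l - 1 ∧ (W 2).length = q - 1 := by
  obtain ⟨hp2, hl2, hq2, -, -, -, a, b, W₁, W₂, W₃, P1, P2, P3, L1, L2, L3, hv, he, c12, c13,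
    c23⟩ := hG
  have k12 : ∀ v, v ∈ W₁.support → v ∈ W₂.support → v = a ∨ v = b := fun v h1 h2 => by
    have : v ∈ {v | v ∈ W₁.support ∧ v ∈ W₂.support} := ⟨h1, h2⟩
    rw [c12] at this; simpa using this
  have k13 : ∀ v, v ∈ W₁.support → v ∈ W₃.support → v = a ∨ v = b := fun v h1 h2 => by
    have : v ∈ {v | v ∈ W₁.support ∧ v ∈ W₃.support} := ⟨h1, h2⟩
    rw [c13] at this; simpa using this
  have k23 : ∀ v, v ∈ W₂.support → v ∈ W₃.support → v = a ∨ v = b := fun v h1 h2 => by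
    have : v ∈ {v | v ∈ W₂.support ∧ v ∈ W₃.support} := ⟨h1, h2⟩
    rw [c23] at this; simpa using this
  obtain ⟨W, w0, w1, w2⟩ : ∃ W : Fin 3 → G.Walk a b, W 0 = W₁ ∧ W 1 = W₂ ∧ W 2 = W₃ :=
    ⟨![W₁, W₂, W₃], rfl, rfl, rfl⟩
  have hP : ∀ t, (W t).IsPath := by
    intro t
    fin_cases t
    · exact w0 ▸ P1
    · exact w1 ▸ P2
    · exact w2 ▸ P3
  have hc : ∀ t t', t ≠ t' → ∀ v, v ∈ (W t).support → v ∈ (W t').support → v = a ∨ v = b := by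
    intro t t' hne v
    fin_cases t <;> fin_cases t' <;>
      simp only [Fin.zero_eta, Fin.mk_one, Fin.reduceFinMk, w0, w1, w2, ne_eq,
        not_true_eq_false] at hne ⊢
    · exact k12 v
    · exact k13 v
    · exact fun h1 h2 => k12 v h2 h1
    · exact k23 v
    · exact fun h1 h2 => k13 v h2 h1
    · exact fun h1 h2 => k23 v h2 h1
  refine ⟨a, b, W, hP, ?_, by rw [w0, L1], by rw [w1, L2], by rw [w2, L3]⟩
  refine ⟨?_, ?_, ?_, ?_, ?_, ?_, ?_, ?_, ?_, ?_⟩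
  · intro t i hi
    exact (W t).adj_getVert_succ hi
  · intro t t' i j hi hj hij
    have inj := fun t => (hP t).getVert_injOn
    by_cases htt : t = t'
    · subst htt
      exact Or.inl ⟨rfl, inj t hi hj hij⟩
    · right
      have h1 : (W t).getVert i ∈ (W t).support := (W t).getVert_mem_support i
      have h2 : (W t).getVert i ∈ (W t').support := by
        rw [hij]; exact (W t').getVert_mem_support j
      rcases hc t t' htt _ h1 h2 with h3 | h3
      · left
        constructor
        · exact inj t hi (Nat.zero_le _) (h3.trans (W t).getVert_zero.symm)
        · exact inj t' hj (Nat.zero_le _) (hij.symm.trans (h3.trans (W t').getVert_zero.symm))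
      · right
        constructor
        · exact inj t hi (le_refl (W t).length) (h3.trans (W t).getVert_length.symm)
        · exact inj t' hj (le_refl (W t').length) (hij.symm.trans (h3.trans (W t').getVert_length.symm))
  · intro t t'; simp
  · intro t t'; simp
  · intro v
    have : ∃ t, v ∈ (W t).support := by
      rcases hv v with h | h | h
      · exact ⟨0, w0 ▸ h⟩
      · exact ⟨1, w1 ▸ h⟩
      · exact ⟨2, w2 ▸ h⟩
    obtain ⟨t, ht⟩ := this
    obtain ⟨i, h1, h2⟩ := SimpleGraph.Walk.mem_support_iff_exists_getVert.mp ht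
    exact ⟨t, i, h2, h1⟩
  · intro u v huv
    have : ∃ t, s(u, v) ∈ (W t).edges := by
      rcases he s(u, v) huv with h | h | h
      · exact ⟨0, w0 ▸ h⟩
      · exact ⟨1, w1 ▸ h⟩
      · exact ⟨2, w2 ▸ h⟩
    obtain ⟨t, ht⟩ := this
    obtain ⟨i, h1, h2⟩ := ((W t).mk_mem_edges_iff_exists).mp ht
    exact ⟨t, i, h1, h2.symm⟩
  · simp only [w0, L1]; grind
  · simp only [w1, L2]; grind
  · simp only [w2, L3]; grind
  · intro t
    fin_cases t
    · simp only [Fin.zero_eta, w0, L1]; omega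
    · simp only [Fin.mk_one, w1, L2]; omega
    · simp only [Fin.reduceFinMk, w2, L3]; omega

section classify
variable {G : SimpleGraph V} {n : Fin 3 → ℕ} {x : Fin 3 → ℕ → V} {C C' : G.Subgraph}

lemma int_adj (h : Th G n x) (hC : IsCycleSubgraph C) {t : Fin 3} {i : ℕ} (hi : i + 1 < n t)
    (hv : x t (i+1) ∈ C.verts) :
    C.Adj (x t (i+1)) (x t i) ∧ C.Adj (x t (i+1)) (x t (i+2)) := by
  have h1 := hC.2 _ hv
  have h2 : {w | C.Adj (x t (i+1)) w} ⊆ {x t i, x t (i+2)} := by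
    intro w hw
    exact (h.nbr_int hi w).mp (C.adj_sub hw)
  have h3 := Set.eq_of_subset_of_ncard_le h2
    (by rw [h1]; exact (Set.ncard_insert_le _ _).trans (by simp)) (Set.toFinite _)
  constructor
  · have : x t i ∈ {w | C.Adj (x t (i+1)) w} := by rw [h3]; simp
    exact this
  · have : x t (i+2) ∈ {w | C.Adj (x t (i+1)) w} := by rw [h3]; simp
    exact this

lemma adj_path (h : Th G n x) (hC : IsCycleSubgraph C) (t : Fin 3) (i : ℕ) (hi : i < n t) :
    C.Adj (x t i) (x t (i+1)) ↔ C.Adj (x t 0) (x t 1) := by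
  induction i with
  | zero => rfl
  | succ i ih =>
    rw [← ih (by omega)]
    constructor
    · intro ha
      exact (h.int_adj hC hi (C.edge_vert ha)).1.symm
    · intro ha
      exact (h.int_adj hC hi (C.edge_vert ha.symm)).2

lemma adj_iff (h : Th G n x) (hC : IsCycleSubgraph C) (u v : V) :
    C.Adj u v ↔ ∃ t i, i < n t ∧ C.Adj (x t 0) (x t 1) ∧ s(u, v) = s(x t i, x t (i+1)) := by
  constructor
  · intro ha
    obtain ⟨t, i, hi, he⟩ := h.edge u v (C.adj_sub ha)
    refine ⟨t, i, hi, ?_, he⟩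
    rw [← h.adj_path hC t i hi]
    rw [← SimpleGraph.Subgraph.mem_edgeSet] at ha ⊢
    rwa [← he]
  · rintro ⟨t, i, hi, ha, he⟩
    rw [← h.adj_path hC t i hi] at ha
    rw [← SimpleGraph.Subgraph.mem_edgeSet] at ha ⊢
    rwa [he]

lemma verts_iff (hC : IsCycleSubgraph C) (u : V) : u ∈ C.verts ↔ ∃ v, C.Adj u v := by
  constructor
  · intro hu
    have h1 := hC.2 u hu
    have : {w | C.Adj u w}.Nonempty := Set.nonempty_of_ncard_ne_zero (by omega)
    exact this
  · rintro ⟨v, hv⟩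
    exact C.edge_vert hv

lemma ncard_T (h : Th G n x) (hC : IsCycleSubgraph C) :
    {t | C.Adj (x t 0) (x t 1)}.ncard = 2 := by
  obtain ⟨v, hv⟩ : C.verts.Nonempty := hC.1.nonempty
  obtain ⟨w, hw⟩ := (verts_iff hC v).mp hv
  obtain ⟨t, i, hi, ha, -⟩ := (h.adj_iff hC v w).mp hw
  have h1 := hC.2 _ (C.edge_vert ha)
  rw [← h1, ← Set.ncard_image_of_injective _ h.inj_one]
  congr 1
  ext y
  simp only [Set.mem_image, Set.mem_ofPred_eq]
  constructor
  · rintro ⟨t', h2, rfl⟩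
    rwa [h.zero t t']
  · intro hy
    obtain ⟨t', rfl⟩ := (h.nbr_zero t y).mp (C.adj_sub hy)
    refine ⟨t', ?_, rfl⟩
    rwa [h.zero t' t]

lemma cycle_ext (h : Th G n x) (hC : IsCycleSubgraph C) (hC' : IsCycleSubgraph C')
    (hT : {t | C.Adj (x t 0) (x t 1)} = {t | C'.Adj (x t 0) (x t 1)}) : C = C' := by
  have hT' : ∀ t, C.Adj (x t 0) (x t 1) ↔ C'.Adj (x t 0) (x t 1) := fun t => by
    have := congrArg (t ∈ ·) hT
    simpa using this
  have hadj : ∀ u v, C.Adj u v ↔ C'.Adj u v := by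
    intro u v
    rw [h.adj_iff hC, h.adj_iff hC']
    simp only [hT']
  apply SimpleGraph.Subgraph.ext
  · ext u
    rw [verts_iff hC, verts_iff hC']
    simp only [hadj]
  · funext u v
    exact propext (hadj u v)

end classify

section cyc
variable {G : SimpleGraph V} {a b : V} {W : Fin 3 → G.Walk a b}

/-- The cycle through two of the three paths. -/
def cyc (W : Fin 3 → G.Walk a b) (t t' : Fin 3) : G.Walk a a := (W t).append (W t').reverse

lemma cyc_tail (t t' : Fin 3) :
    (cyc W t t').support.tail = (W t).support.tail ++ (W t').reverse.support.tail := by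
  rw [cyc, SimpleGraph.Walk.tail_support_append]

lemma cyc_isCycle (hP : ∀ t, (W t).IsPath)
    (h : Th G (fun t => (W t).length) (fun t => (W t).getVert)) {t t' : Fin 3} (htt : t ≠ t') :
    (cyc W t t').IsCycle := by
  rw [SimpleGraph.Walk.isCycle_def]
  refine ⟨?_, ?_, ?_⟩
  · rw [SimpleGraph.Walk.isTrail_def, cyc, SimpleGraph.Walk.edges_append,
      SimpleGraph.Walk.edges_reverse]
    refine List.Nodup.append (hP t).isTrail.edges_nodup ?_ ?_
    · rw [List.nodup_reverse]; exact (hP t').isTrail.edges_nodup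
    · intro e h1 h2
      rw [List.mem_reverse] at h2
      induction e using Sym2.ind with
      | _ u v =>
      obtain ⟨i, hi, h3⟩ := ((W t).mk_mem_edges_iff_exists).mp h1
      obtain ⟨j, hj, h4⟩ := ((W t').mk_mem_edges_iff_exists).mp h2
      rw [← h4, Sym2.eq_iff] at h3
      have h5 := h.two_le htt
      have key : ∀ i' j', i' ≤ (W t).length → j' ≤ (W t').length →
        (W t).getVert i' = (W t').getVert j' →
        (i' = 0 ∧ j' = 0) ∨ (i' = (W t).length ∧ j' = (W t').length) := by
        intro i' j' a1 a2 a3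
        rcases h.inj t t' i' j' a1 a2 a3 with h6 | h6
        · exact absurd h6.1 htt
        · exact h6
      rcases h3 with ⟨e1, e2⟩ | ⟨e1, e2⟩
      · have := key _ _ (by omega) (by omega) e1
        have := key _ _ (by omega) (by omega) e2
        omega
      · have := key _ _ (by omega) (by omega) e1
        have := key _ _ (by omega) (by omega) e2
        omega
  · intro h0
    have h1 : (cyc W t t').length = 0 := by rw [h0]; rfl
    rw [cyc, SimpleGraph.Walk.length_append] at h1
    have := h.pos t
    omega
  · rw [cyc_tail]
    have n1 := (hP t).support_nodup
    have n2 := (hP t').reverse.support_nodup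
    rw [SimpleGraph.Walk.support_eq_cons, List.nodup_cons] at n1 n2
    refine List.Nodup.append n1.2 n2.2 ?_
    intro v h1 h2
    have m1 : v ∈ (W t).support := List.mem_of_mem_tail h1
    have m2 : v ∈ (W t').support := by
      have := List.mem_of_mem_tail h2
      rwa [SimpleGraph.Walk.support_reverse, List.mem_reverse] at this
    obtain ⟨i, e1, hi⟩ := SimpleGraph.Walk.mem_support_iff_exists_getVert.mp m1
    obtain ⟨j, e2, hj⟩ := SimpleGraph.Walk.mem_support_iff_exists_getVert.mp m2
    rcases h.inj t t' i j hi hj (e1.trans e2.symm) with h6 | h6 | h6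
    · exact htt h6.1
    · rw [h6.1, SimpleGraph.Walk.getVert_zero] at e1
      exact n1.1 (e1 ▸ h1)
    · rw [h6.2, SimpleGraph.Walk.getVert_length] at e2
      exact n2.1 (e2 ▸ h2)

lemma cyc_isCycleSubgraph (hP : ∀ t, (W t).IsPath)
    (h : Th G (fun t => (W t).length) (fun t => (W t).getVert)) {t t' : Fin 3} (htt : t ≠ t') :
    IsCycleSubgraph (cyc W t t').toSubgraph := by
  refine ⟨SimpleGraph.Walk.toSubgraph_connected _, fun v hv => ?_⟩
  exact (cyc_isCycle hP h htt).ncard_neighborSet_toSubgraph_eq_two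
    ((SimpleGraph.Walk.mem_verts_toSubgraph _).mp hv)

lemma cyc_ncard (hP : ∀ t, (W t).IsPath)
    (h : Th G (fun t => (W t).length) (fun t => (W t).getVert)) {t t' : Fin 3} (htt : t ≠ t') :
    (cyc W t t').toSubgraph.verts.ncard = (W t).length + (W t').length := by
  have hc := cyc_isCycle hP h htt
  have h1 : (cyc W t t').toSubgraph.verts = ((cyc W t t').support.tail.toFinset : Set V) := by
    ext v
    rw [SimpleGraph.Walk.mem_verts_toSubgraph]
    simp only [List.coe_toFinset, Set.mem_ofPred_eq]
    constructor
    · intro hv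
      rw [SimpleGraph.Walk.support_eq_cons, List.mem_cons] at hv
      rcases hv with rfl | hv
      · exact SimpleGraph.Walk.end_mem_tail_support hc.not_nil
      · exact hv
    · exact List.mem_of_mem_tail
  rw [h1, Set.ncard_coe_finset, List.toFinset_card_of_nodup hc.support_nodup, List.length_tail,
    SimpleGraph.Walk.length_support]
  simp [cyc]

lemma cyc_T (hP : ∀ t, (W t).IsPath)
    (h : Th G (fun t => (W t).length) (fun t => (W t).getVert)) {t t' : Fin 3} (htt : t ≠ t') :
    {r | (cyc W t t').toSubgraph.Adj ((W r).getVert 0) ((W r).getVert 1)} = {t, t'} := by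
  symm
  apply Set.eq_of_subset_of_ncard_le
  · intro r hr
    change (cyc W t t').toSubgraph.Adj ((W r).getVert 0) ((W r).getVert 1)
    rw [SimpleGraph.Walk.adj_toSubgraph_iff_mem_edges, cyc, SimpleGraph.Walk.edges_append,
      SimpleGraph.Walk.edges_reverse, List.mem_append, List.mem_reverse]
    have : s((W r).getVert 0, (W r).getVert 1) ∈ (W r).edges :=
      ((W r).mk_mem_edges_iff_exists).mpr ⟨0, h.pos r, rfl⟩
    rcases hr with rfl | hr
    · exact Or.inl this
    · obtain rfl : r = t' := hr
      exact Or.inr this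
  · have := h.ncard_T (cyc_isCycleSubgraph hP h htt)
    rw [this, Set.ncard_pair htt]
  · exact Set.toFinite _

lemma classify (hP : ∀ t, (W t).IsPath)
    (h : Th G (fun t => (W t).length) (fun t => (W t).getVert)) {C : G.Subgraph}
    (hC : IsCycleSubgraph C) : C = (cyc W 0 1).toSubgraph ∨ C = (cyc W 0 2).toSubgraph ∨
      C = (cyc W 1 2).toSubgraph := by
  have key : ∀ t t', t ≠ t' →
      {r | C.Adj ((W r).getVert 0) ((W r).getVert 1)} = {t, t'} → C = (cyc W t t').toSubgraph := by
    intro t t' htt hT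
    exact h.cycle_ext hC (cyc_isCycleSubgraph hP h htt) (hT.trans (cyc_T hP h htt).symm)
  obtain ⟨t, t', htt, hT⟩ := Set.ncard_eq_two.mp (h.ncard_T hC)
  fin_cases t <;> fin_cases t' <;>
    simp only [Fin.zero_eta, Fin.mk_one, Fin.reduceFinMk, ne_eq, not_true_eq_false] at htt hT
  · exact Or.inl (key 0 1 htt hT)
  · exact Or.inr (Or.inl (key 0 2 htt hT))
  · exact Or.inl (key 0 1 (by decide) (hT.trans (Set.pair_comm _ _)))
  · exact Or.inr (Or.inr (key 1 2 htt hT))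
  · exact Or.inr (Or.inl (key 0 2 (by decide) (hT.trans (Set.pair_comm _ _))))
  · exact Or.inr (Or.inr (key 1 2 (by decide) (hT.trans (Set.pair_comm _ _))))

end cyc

section sig
variable {M : MixedGraph V} {a b : V} {W : Fin 3 → M.graph.Walk a b}

lemma cycleSig_iff (hP : ∀ t, (W t).IsPath)
    (h : Th M.graph (fun t => (W t).length) (fun t => (W t).getVert)) {t t' : Fin 3}
    (htt : t ≠ t') (P : ℕ → Prop) :
    CycleSig M (cyc W t t').toSubgraph P ↔
      P (pot M (fun t => (W t).getVert) t (W t).length -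
        pot M (fun t => (W t).getVert) t' (W t').length).natAbs := by
  set x : Fin 3 → ℕ → V := fun t => (W t).getVert with hx
  have main : ∀ (u : V) (w : M.graph.Walk u u), w.IsCycle →
      {e | e ∈ w.edges} = (cyc W t t').toSubgraph.edgeSet →
      walkSignature M w = (pot M x t (W t).length - pot M x t' (W t').length).natAbs := by
    intro u w hw hE
    obtain ⟨φ, hφ⟩ := h.extend
      (fun r i => if i = (W r).length then pot M x t (W t).length else pot M x r i)
      (by
        intro r r'
        have h1 := h.pos r
        have h2 := h.pos r'
        rw [if_neg (by omega), if_neg (by omega), pot_zero, pot_zero])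
      (by intro r r'; simp)
    have hφ' : ∀ i, i ≤ (W t).length → φ (x t i) = pot M x t i := by
      intro i hi
      rw [hφ t i hi]
      split_ifs with h1
      · rw [h1]
      · rfl
    obtain ⟨m, hm⟩ : ∃ m, (W t').length = m + 1 :=
      ⟨(W t').length - 1, by have := h.pos t'; omega⟩
    have hmem : ∀ c d, s(c, d) ∈ w.edges ↔
        s(c, d) ∈ (W t).edges ∨ s(c, d) ∈ (W t').edges := by
      intro c d
      have : s(c, d) ∈ {e | e ∈ w.edges} ↔ s(c, d) ∈ (cyc W t t').toSubgraph.edgeSet := by rw [hE]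
      rw [SimpleGraph.Walk.mem_edges_toSubgraph, cyc, SimpleGraph.Walk.edges_append,
        SimpleGraph.Walk.edges_reverse, List.mem_append, List.mem_reverse] at this
      exact this
    have hs : ∀ u v, sgnArc M v u - (φ u - φ v) = -(sgnArc M u v - (φ v - φ u)) := by
      intro u v; rw [sgnArc_swap]; ring
    have h1 := walkSum_single (fun c d => sgnArc M c d - (φ d - φ c)) hs
      (a := x t' m) (b := x t' (m+1)) w hw.isTrail.edges_nodup
      ((hmem _ _).mpr (Or.inr (((W t').mk_mem_edges_iff_exists).mpr ⟨m, by omega, rfl⟩)))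
      (by
        intro c d hcd hne
        have gen : ∀ c d, (∃ i < (W t).length, c = x t i ∧ d = x t (i+1)) ∨
            (∃ i < m, c = x t' i ∧ d = x t' (i+1)) → sgnArc M c d - (φ d - φ c) = 0 := by
          rintro c d (⟨i, hi, rfl, rfl⟩ | ⟨i, hi, rfl, rfl⟩)
          · rw [hφ' i (by omega), hφ' (i+1) (by omega), pot_succ]; ring
          · rw [hφ t' i (by omega), hφ t' (i+1) (by omega),
              if_neg (by omega), if_neg (by omega), pot_succ]; ring
        have gen2 : (∃ i < (W t).length, s(x t i, x t (i+1)) = s(c, d)) ∨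
            (∃ i < m, s(x t' i, x t' (i+1)) = s(c, d)) := by
          rcases (hmem c d).mp hcd with h2 | h2
          · exact Or.inl (((W t).mk_mem_edges_iff_exists).mp h2)
          · obtain ⟨i, hi, h3⟩ := ((W t').mk_mem_edges_iff_exists).mp h2
            refine Or.inr ⟨i, ?_, h3⟩
            by_contra hmi
            obtain rfl : i = m := by omega
            exact hne h3.symm
        rcases gen2 with ⟨i, hi, h3⟩ | ⟨i, hi, h3⟩ <;> rw [Sym2.eq_iff] at h3 <;>
          rcases h3 with ⟨e1, e2⟩ | ⟨e1, e2⟩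
        · exact gen c d (Or.inl ⟨i, hi, e1.symm, e2.symm⟩)
        · have := gen d c (Or.inl ⟨i, hi, e1.symm, e2.symm⟩)
          have h4 := hs c d
          omega
        · exact gen c d (Or.inr ⟨i, hi, e1.symm, e2.symm⟩)
        · have := gen d c (Or.inr ⟨i, hi, e1.symm, e2.symm⟩)
          have h4 := hs c d
          omega)
    rw [walkSum_sub (sgnArc M) (fun c d => φ d - φ c), walkSum_potential, sub_self, sub_zero] at h1
    rw [walkSignature_eq, h1, hφ t' m (by omega), hφ t' (m+1) (by omega),
      if_pos hm.symm, if_neg (by omega), hm, pot_succ t' m]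
    omega
  constructor
  · rintro ⟨u, w, hw, -, hE, hPw⟩
    rwa [main u w hw hE] at hPw
  · intro hPw
    have hE : {e | e ∈ (cyc W t t').edges} = (cyc W t t').toSubgraph.edgeSet :=
      (SimpleGraph.Walk.edgeSet_toSubgraph _).symm
    refine ⟨a, cyc W t t', cyc_isCycle hP h htt,
      (SimpleGraph.Walk.verts_toSubgraph _).symm, hE, ?_⟩
    rwa [main a _ (cyc_isCycle hP h htt) hE]

end sig
end Th


lemma I_zpow_eq_one_iff (k : ℤ) : Complex.I ^ k = 1 ↔ 4 ∣ k := by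
  have h4 : Complex.I ^ (4 : ℤ) = 1 := by
    exact_mod_cast Complex.I_pow_four
  have hk : Complex.I ^ k = Complex.I ^ (k % 4) := by
    conv_lhs => rw [← Int.emod_add_mul_ediv k 4]
    rw [zpow_add₀ Complex.I_ne_zero, zpow_mul, h4, one_zpow, mul_one]
  rw [hk]
  have : k % 4 = 0 ∨ k % 4 = 1 ∨ k % 4 = 2 ∨ k % 4 = 3 := by omega
  rcases this with h | h | h | h
  · rw [h]; simp; omega
  · rw [h]
    have : ¬ (4 : ℤ) ∣ k := by omega
    simp [this, Complex.ext_iff]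
  · rw [h]
    have h5 : Complex.I ^ (2 : ℤ) = -1 := by exact_mod_cast Complex.I_sq
    have : ¬ (4 : ℤ) ∣ k := by omega
    rw [h5]; simp [this, Complex.ext_iff]; norm_num
  · rw [h]
    have h5 : Complex.I ^ (3 : ℤ) = -Complex.I := by exact_mod_cast Complex.I_pow_three
    have : ¬ (4 : ℤ) ∣ k := by omega
    rw [h5]; simp [this, Complex.ext_iff]

lemma I_zpow_eq_iff (j k : ℤ) : Complex.I ^ j = Complex.I ^ k ↔ 4 ∣ j - k := by
  rw [← I_zpow_eq_one_iff, zpow_sub₀ Complex.I_ne_zero,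
    div_eq_one_iff_eq (zpow_ne_zero _ Complex.I_ne_zero)]

/-- Let G̃ be a mixed bicyclic graph with underlying graph
θ(p,l,q), p even, l and q odd. Then r(G̃) = 2m(G) − 2κ(G) + 1 iff the two odd cycles
of G̃ have even signatures and the even cycle C̃_{q+l−2} satisfies
q + l + σ(C̃_{q+l−2}) ≡ 2 (mod 4). -/
theorem theta_hRank_eq_lower_bound_add_one_iff
    {V : Type u} [Fintype V] [DecidableEq V] (M : MixedGraph V) (p l q : ℕ)
    (hp : Even p) (hl : Odd l) (hq : Odd q) (hG : IsThetaGraph M.graph p l q) :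
    (M.hRank : ℤ) =
        2 * (matchingNumber M.graph : ℤ) - 2 * (evenCycleCount M.graph : ℤ) + 1 ↔
      (OddCyclesSig M Even ∧ EvenCyclesSig M (fun _ s => (q + l + s) % 4 = 2)) := by
  obtain ⟨a, b, W, hP, h, n0, n1, n2⟩ := Th.of_isThetaGraph hp hl hq hG
  have hlen0 := h.pos 0
  have hlen1 := h.pos 1
  have hlen2 := h.pos 2
  have c01 := Th.cyc_ncard hP h (t := 0) (t' := 1) (by decide)
  have c02 := Th.cyc_ncard hP h (t := 0) (t' := 2) (by decide)
  have c12 := Th.cyc_ncard hP h (t := 1) (t' := 2) (by decide)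
  have i01 := Th.cyc_isCycleSubgraph hP h (t := 0) (t' := 1) (by decide)
  have i02 := Th.cyc_isCycleSubgraph hP h (t := 0) (t' := 2) (by decide)
  have i12 := Th.cyc_isCycleSubgraph hP h (t := 1) (t' := 2) (by decide)
  have hp2 : p % 2 = 0 := Nat.even_iff.mp hp
  have hl2 : l % 2 = 1 := Nat.odd_iff.mp hl
  have hq2 : q % 2 = 1 := Nat.odd_iff.mp hq
  have o01 : Odd ((Th.cyc W 0 1).toSubgraph.verts.ncard) := by
    rw [c01, Nat.odd_iff]; omega
  have o02 : Odd ((Th.cyc W 0 2).toSubgraph.verts.ncard) := by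
    rw [c02, Nat.odd_iff]; omega
  have e12 : Even ((Th.cyc W 1 2).toSubgraph.verts.ncard) := by
    rw [c12, Nat.even_iff]; omega
  have hκ : evenCycleCount M.graph = 1 := by
    have : {C : M.graph.Subgraph | IsCycleSubgraph C ∧ Even C.verts.ncard} =
        {(Th.cyc W 1 2).toSubgraph} := by
      ext C
      constructor
      · rintro ⟨hC, hE⟩
        rcases Th.classify hP h hC with rfl | rfl | rfl
        · exact absurd hE (Nat.not_even_iff_odd.mpr o01)
        · exact absurd hE (Nat.not_even_iff_odd.mpr o02)
        · rfl
      · rintro rfl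
        exact ⟨i12, e12⟩
    rw [evenCycleCount, this, Set.ncard_singleton]
  have hodd : OddCyclesSig M Even ↔
      CycleSig M (Th.cyc W 0 1).toSubgraph Even ∧ CycleSig M (Th.cyc W 0 2).toSubgraph Even := by
    constructor
    · intro hh
      exact ⟨hh _ i01 o01, hh _ i02 o02⟩
    · rintro ⟨h1, h2⟩ C hC hO
      rcases Th.classify hP h hC with rfl | rfl | rfl
      · exact h1
      · exact h2
      · exact absurd e12 (Nat.not_even_iff_odd.mpr hO)
  have heven : EvenCyclesSig M (fun _ s => (q + l + s) % 4 = 2) ↔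
      CycleSig M (Th.cyc W 1 2).toSubgraph (fun s => (q + l + s) % 4 = 2) := by
    constructor
    · intro hh
      exact hh _ i12 e12
    · intro h1 C hC hE
      rcases Th.classify hP h hC with rfl | rfl | rfl
      · exact absurd hE (Nat.not_even_iff_odd.mpr o01)
      · exact absurd hE (Nat.not_even_iff_odd.mpr o02)
      · exact h1
  have hm := h.two_mul_matchingNumber
  have hr := Th.hRank_add M
  have hk := h.finrank_ker
  have hiff : (M.hRank : ℤ) =
        2 * (matchingNumber M.graph : ℤ) - 2 * (evenCycleCount M.graph : ℤ) + 1 ↔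
      Module.finrank ℂ (LinearMap.ker M.hMatrix.mulVecLin) = 1 := by
    rw [hκ]; omega
  rw [hiff, hk, hodd, heven, Th.cycleSig_iff hP h (by decide), Th.cycleSig_iff hP h (by decide),
    Th.cycleSig_iff hP h (by decide)]
  simp only [Th.gam]
  rw [I_zpow_eq_iff, ← zpow_natCast, ← zpow_natCast, ← zpow_mul, ← zpow_mul, Ne, I_zpow_eq_iff,
    Nat.even_iff, Nat.even_iff, n0, n1, n2]
  generalize Th.pot M (fun t => (W t).getVert) 0 (p - 1) = S0
  generalize Th.pot M (fun t => (W t).getVert) 1 (l - 1) = S1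
  generalize Th.pot M (fun t => (W t).getVert) 2 (q - 1) = S2
  push_cast
  obtain ⟨p', rfl⟩ : ∃ p', p = 2 * p' + 2 := ⟨p / 2 - 1, by omega⟩
  obtain ⟨l', rfl⟩ : ∃ l', l = 2 * l' + 1 := ⟨l / 2, by omega⟩
  obtain ⟨q', rfl⟩ : ∃ q', q = 2 * q' + 1 := ⟨q / 2, by omega⟩
  omega

end MixedPaper
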